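/- arXiv:2012.11947 — 2 statements merged into one kernel-verified Lean document; each statement's English description precedes it below -/
import Mathlib

section
/- For every λ ∈ (−2, 0) and every p > 0, the improper integral lim_{T→∞} ∫₀^T sin(px) x^λ dx exists and equals −(π/2) · p^{−λ−1} / (sin(πλ/2) · Γ(−λ)), where Γ is the Gamma function. -/
open Filter

open MeasureTheory Set in
lemma aux_int (a p : ℝ) (ha : 0 < a) (ha2 : a < 2) (hp : 0 < p) :
    IntegrableOn (fun s : ℝ => s ^ (a - 1) * (s ^ 2 + p ^ 2)⁻¹) (Ioi 0) ∧
    ∫ s in Ioi (0:ℝ), s ^ (a - 1) * (s ^ 2 + p ^ 2)⁻¹ =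
      p ^ (a - 2) * (Real.pi / (2 * Real.sin (Real.pi * a / 2))) := by
  set μ : Measure ℝ := volume.restrict (Ioi 0) with hμ
  set f : ℝ × ℝ → ℝ := fun z => z.2 ^ (a - 1) * Real.exp (-z.1 * (z.2 ^ 2 + p ^ 2)) with hf
  have hmeas : AEStronglyMeasurable f (μ.prod μ) := by
    apply Measurable.aestronglyMeasurable
    fun_prop
  have hsplit : ∀ u s : ℝ, f (u, s) = Real.exp (-(p ^ 2 * u)) * (s ^ (a - 1) * Real.exp (-u * s ^ (2:ℝ))) := by
    intro u s
    simp only [hf]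
    rw [mul_left_comm, ← Real.exp_add, Real.rpow_two]
    ring_nf
  have hin : ∀ u : ℝ, 0 < u → ∫ s, f (u, s) ∂μ =
      (Real.Gamma (a / 2) / 2) * (u ^ ((1 - a / 2) - 1) * Real.exp (-(p ^ 2 * u))) := by
    intro u hu
    simp_rw [hsplit]
    rw [integral_const_mul, integral_rpow_mul_exp_neg_mul_rpow (by norm_num) (by linarith) hu]
    rw [show -(a - 1 + 1) / 2 = 1 - a / 2 - 1 by ring, show (a - 1 + 1) / 2 = a / 2 by ring]
    ring
  have hGint : Integrable (fun u : ℝ => (Real.Gamma (a / 2) / 2) *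
      (u ^ ((1 - a / 2) - 1) * Real.exp (-(p ^ 2 * u)))) μ := by
    apply Integrable.const_mul
    have := integrableOn_rpow_mul_exp_neg_mul_rpow (s := 1 - a / 2 - 1) (p := 1) (b := p ^ 2)
      (by linarith) (by norm_num) (by positivity)
    simpa [IntegrableOn] using this
  have hint : Integrable f (μ.prod μ) := by
    rw [integrable_prod_iff hmeas]
    constructor
    · filter_upwards [ae_restrict_mem measurableSet_Ioi] with u hu
      simp_rw [hsplit]
      apply Integrable.const_mul
      exact integrableOn_rpow_mul_exp_neg_mul_rpow (by linarith) (by norm_num) hu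
    · refine hGint.congr ?_
      filter_upwards [ae_restrict_mem measurableSet_Ioi] with u hu
      rw [← hin u hu]
      refine integral_congr_ae ?_
      filter_upwards [ae_restrict_mem measurableSet_Ioi] with s hs
      have : 0 ≤ f (u, s) := by
        have := Real.rpow_nonneg (le_of_lt hs) (a - 1)
        simp only [hf]; positivity
      rw [Real.norm_of_nonneg this]
  have hout : ∀ s : ℝ, ∫ u, f (u, s) ∂μ = s ^ (a - 1) * (s ^ 2 + p ^ 2)⁻¹ := by
    intro s
    simp only [hf]
    rw [integral_const_mul]
    congr 1
    have hc : 0 < s ^ 2 + p ^ 2 := by positivity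
    have := integral_exp_mul_Ioi (a := -(s ^ 2 + p ^ 2)) (by linarith) 0
    simp only [mul_zero, Real.exp_zero] at this
    rw [show (s ^ 2 + p ^ 2)⁻¹ = -1 / -(s ^ 2 + p ^ 2) by rw [neg_div_neg_eq, one_div], ← this]
    congr 1; ext u; congr 1; ring
  constructor
  · have := hint.integral_prod_right
    simp_rw [hout] at this
    exact this
  · have h := integral_integral_swap (f := fun u s => f (u, s)) hint
    simp_rw [hout] at h
    rw [← h]
    have h2 : ∫ u, ∫ s, f (u, s) ∂μ ∂μ = ∫ u, (Real.Gamma (a / 2) / 2) *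
      (u ^ ((1 - a / 2) - 1) * Real.exp (-(p ^ 2 * u))) ∂μ := by
      refine integral_congr_ae ?_
      filter_upwards [ae_restrict_mem measurableSet_Ioi] with u hu
      exact hin u hu
    rw [h2, integral_const_mul, Real.integral_rpow_mul_exp_neg_mul_Ioi (by linarith) (by positivity)]
    have h3 := Real.Gamma_mul_Gamma_one_sub (a / 2)
    have h4 : (1 / p ^ 2) ^ (1 - a / 2) = p ^ (a - 2) := by
      rw [one_div, Real.inv_rpow (by positivity), ← Real.rpow_neg (by positivity), ← Real.rpow_two,
        ← Real.rpow_mul hp.le]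
      congr 1; ring
    rw [h4]
    calc _ = p ^ (a - 2) * (Real.Gamma (a / 2) * Real.Gamma (1 - a / 2)) / 2 := by ring
      _ = _ := by
        rw [h3, show Real.pi * (a / 2) = Real.pi * a / 2 by ring, mul_comm (2:ℝ), ← div_div]; ring

lemma aux_inner (p s T : ℝ) (hp : 0 < p) :
    ∫ x in (0:ℝ)..T, Real.sin (p * x) * Real.exp (-(s * x)) =
      (p - Real.exp (-(s * T)) * (s * Real.sin (p * T) + p * Real.cos (p * T))) *
        (s ^ 2 + p ^ 2)⁻¹ := by
  have hc : s ^ 2 + p ^ 2 ≠ 0 := by positivity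
  have hd : ∀ x : ℝ, HasDerivAt (fun x : ℝ => -(Real.exp (-(s * x)) *
      (s * Real.sin (p * x) + p * Real.cos (p * x))) * (s ^ 2 + p ^ 2)⁻¹)
      (Real.sin (p * x) * Real.exp (-(s * x))) x := by
    intro x
    have h1 : HasDerivAt (fun x : ℝ => p * x) p x := by simpa using (hasDerivAt_id x).const_mul p
    have h2 : HasDerivAt (fun x : ℝ => -(s * x)) (-s) x := by
      have := (hasDerivAt_id x).const_mul (-s)
      simpa using this
    have := ((h2.exp.mul ((h1.sin.const_mul s).add (h1.cos.const_mul p))).neg).mul_const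
      ((s ^ 2 + p ^ 2)⁻¹)
    convert! this using 1
    simp only [Pi.add_apply]
    field_simp
    ring
  rw [intervalIntegral.integral_eq_sub_of_hasDerivAt (fun x _ => hd x)
    (Continuous.intervalIntegrable (by fun_prop) _ _)]
  simp
  ring

open MeasureTheory Set in
lemma aux_fubini (a p T : ℝ) (ha : 0 < a) (ha2 : a < 2) (hp : 0 < p) (hT : 0 < T) :
    ∫ x in (0:ℝ)..T, Real.sin (p * x) * x ^ (-a) =
      (Real.Gamma a)⁻¹ * ∫ s in Ioi (0:ℝ), s ^ (a - 1) *
      ((p - Real.exp (-(s * T)) * (s * Real.sin (p * T) + p * Real.cos (p * T))) *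
        (s ^ 2 + p ^ 2)⁻¹) := by
  have hG := Real.Gamma_pos_of_pos ha
  set μ : Measure ℝ := volume.restrict (Ioi 0) with hμ
  set ν : Measure ℝ := volume.restrict (Ioc 0 T) with hν
  set f : ℝ × ℝ → ℝ := fun z => Real.sin (p * z.1) * (z.2 ^ (a - 1) * Real.exp (-(z.1 * z.2)))
    with hf
  have hmeas : AEStronglyMeasurable f (ν.prod μ) := by
    apply Measurable.aestronglyMeasurable
    fun_prop
  have hk : ∀ x : ℝ, 0 < x → ∫ s, s ^ (a - 1) * Real.exp (-(x * s)) ∂μ =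
      x ^ (-a) * Real.Gamma a := by
    intro x hx
    rw [Real.integral_rpow_mul_exp_neg_mul_Ioi ha hx, one_div, Real.inv_rpow hx.le,
      Real.rpow_neg hx.le]
  have hint : Integrable f (ν.prod μ) := by
    rw [integrable_prod_iff hmeas]
    constructor
    · filter_upwards [ae_restrict_mem measurableSet_Ioc] with x hx
      simp only [hf]
      apply Integrable.const_mul
      have := integrableOn_rpow_mul_exp_neg_mul_rpow (s := a - 1) (p := 1) (b := x)
        (by linarith) (by norm_num) hx.1
      simpa [IntegrableOn] using this
    · have hb : Integrable (fun x : ℝ => (p * Real.Gamma a) * x ^ (1 - a)) ν := by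
        apply Integrable.const_mul
        have := intervalIntegral.intervalIntegrable_rpow' (a := 0) (b := T) (r := 1 - a)
          (by linarith)
        exact (intervalIntegrable_iff_integrableOn_Ioc_of_le hT.le).1 this
      refine hb.mono' hmeas.norm.integral_prod_right' ?_
      filter_upwards [ae_restrict_mem measurableSet_Ioc] with x hx
      have e : ∫ s, ‖f (x, s)‖ ∂μ = |Real.sin (p * x)| * (x ^ (-a) * Real.Gamma a) := by
        rw [← hk x hx.1, ← integral_const_mul]
        refine integral_congr_ae ?_
        filter_upwards [ae_restrict_mem measurableSet_Ioi] with s hs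
        simp only [hf, Real.norm_eq_abs, abs_mul, Real.abs_exp,
          abs_of_nonneg (Real.rpow_nonneg (le_of_lt hs) (a - 1))]
      have hxa := Real.rpow_nonneg hx.1.le (-a)
      rw [e, Real.norm_of_nonneg (by positivity)]
      have h1 : |Real.sin (p * x)| ≤ p * x := by
        have := Real.abs_sin_le_abs (x := p * x)
        rwa [abs_of_pos (mul_pos hp hx.1)] at this
      calc _ ≤ (p * x) * (x ^ (-a) * Real.Gamma a) := by gcongr
        _ = _ := by
          rw [show 1 - a = 1 + -a by ring, Real.rpow_add hx.1, Real.rpow_one]; ring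
  have h := integral_integral_swap (f := fun x s => f (x, s)) hint
  have hL : ∫ x, ∫ s, f (x, s) ∂μ ∂ν =
      Real.Gamma a * ∫ x in (0:ℝ)..T, Real.sin (p * x) * x ^ (-a) := by
    rw [intervalIntegral.integral_of_le hT.le, ← integral_const_mul]
    refine integral_congr_ae ?_
    filter_upwards [ae_restrict_mem measurableSet_Ioc] with x hx
    simp only [hf]
    rw [integral_const_mul, hk x hx.1]
    ring
  have hR : ∀ s, ∫ x, f (x, s) ∂ν = s ^ (a - 1) *
      ((p - Real.exp (-(s * T)) * (s * Real.sin (p * T) + p * Real.cos (p * T))) *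
        (s ^ 2 + p ^ 2)⁻¹) := by
    intro s
    rw [← aux_inner p s T hp, intervalIntegral.integral_of_le hT.le, ← integral_const_mul]
    congr 1; ext x
    simp only [hf]
    rw [mul_comm x s]; ring
  rw [hL] at h
  simp_rw [hR] at h
  rw [← h, inv_mul_cancel_left₀ hG.ne']

open MeasureTheory Set in
lemma aux_limit (a p : ℝ) (ha : 0 < a) (ha2 : a < 2) (hp : 0 < p) :
    Tendsto (fun T : ℝ => ∫ s in Ioi (0:ℝ), s ^ (a - 1) *
      ((p - Real.exp (-(s * T)) * (s * Real.sin (p * T) + p * Real.cos (p * T))) *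
        (s ^ 2 + p ^ 2)⁻¹)) atTop
      (nhds (∫ s in Ioi (0:ℝ), s ^ (a - 1) * (p * (s ^ 2 + p ^ 2)⁻¹))) := by
  refine tendsto_integral_filter_of_dominated_convergence
    (fun s => (2 * p + 1) * (s ^ (a - 1) * (s ^ 2 + p ^ 2)⁻¹)) ?_ ?_
    ((aux_int a p ha ha2 hp).1.const_mul _) ?_
  · refine Eventually.of_forall fun T => ?_
    apply Measurable.aestronglyMeasurable
    fun_prop
  · filter_upwards [eventually_ge_atTop 1] with T hT
    filter_upwards [ae_restrict_mem measurableSet_Ioi] with s hs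
    have hs : 0 < s := hs
    have hsa := Real.rpow_nonneg hs.le (a - 1)
    have hE := Real.exp_pos (-(s * T))
    have hE1 : Real.exp (-(s * T)) ≤ 1 := Real.exp_le_one_iff.2 (by nlinarith)
    have hE2 : Real.exp (-(s * T)) * s ≤ 1 := by
      have h1 : s ≤ Real.exp (s * T) := by nlinarith [Real.add_one_le_exp (s * T)]
      calc _ ≤ Real.exp (-(s * T)) * Real.exp (s * T) := by gcongr
        _ = 1 := by rw [← Real.exp_add]; simp
    have hb : |p - Real.exp (-(s * T)) * (s * Real.sin (p * T) + p * Real.cos (p * T))|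
        ≤ 2 * p + 1 := by
      have e : Real.exp (-(s * T)) * (s * Real.sin (p * T) + p * Real.cos (p * T)) =
        (Real.exp (-(s * T)) * s) * Real.sin (p * T) +
        p * (Real.exp (-(s * T)) * Real.cos (p * T)) := by ring
      have h1 : |(Real.exp (-(s * T)) * s) * Real.sin (p * T)| ≤ 1 := by
        rw [abs_mul, abs_of_pos (by positivity)]
        exact mul_le_one₀ hE2 (abs_nonneg _) (Real.abs_sin_le_one _)
      have h2 : |Real.exp (-(s * T)) * Real.cos (p * T)| ≤ 1 := by
        rw [abs_mul, abs_of_pos hE]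
        exact mul_le_one₀ hE1 (abs_nonneg _) (Real.abs_cos_le_one _)
      rw [e]
      rw [abs_le] at *
      constructor <;> nlinarith
    rw [Real.norm_eq_abs, abs_mul, abs_mul, abs_of_nonneg hsa,
      abs_of_nonneg (a := (s ^ 2 + p ^ 2)⁻¹) (by positivity)]
    calc _ ≤ s ^ (a - 1) * ((2 * p + 1) * (s ^ 2 + p ^ 2)⁻¹) := by gcongr
      _ = _ := by ring
  · filter_upwards [ae_restrict_mem measurableSet_Ioi] with s hs
    have hs : 0 < s := hs
    have hz : Tendsto (fun T : ℝ => Real.exp (-(s * T)) *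
        (s * Real.sin (p * T) + p * Real.cos (p * T))) atTop (nhds 0) := by
      have h0 : Tendsto (fun T : ℝ => Real.exp (-(s * T)) * (s + p)) atTop (nhds 0) := by
        have := (Real.tendsto_exp_neg_atTop_nhds_zero.comp
          (tendsto_id.const_mul_atTop hs)).mul_const (s + p)
        simpa using this
      refine squeeze_zero_norm (fun T => ?_) h0
      rw [Real.norm_eq_abs, abs_mul, Real.abs_exp]
      gcongr
      have h1 := abs_le.1 (Real.abs_sin_le_one (p * T))
      have h2 := abs_le.1 (Real.abs_cos_le_one (p * T))
      rw [abs_le]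
      constructor <;> nlinarith
    have := ((hz.const_sub p).mul_const ((s ^ 2 + p ^ 2)⁻¹)).const_mul (s ^ (a - 1))
    simpa using this

/-- The sine transform of the homogeneous function `x^λ` for `λ ∈ (-2,0)`:
`lim_{T→∞} ∫₀^T sin(px) x^λ dx = -(π/2) p^{-λ-1} / (sin(πλ/2) Γ(-λ))`. -/
theorem sine_transform_rpow (lam p : ℝ) (hlam : lam ∈ Set.Ioo (-2:ℝ) 0) (hp : 0 < p) :
    Tendsto (fun T : ℝ => ∫ x in (0:ℝ)..T, Real.sin (p * x) * x ^ lam) atTop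
      (nhds (-(Real.pi/2) * p ^ (-lam - 1) /
        (Real.sin (Real.pi * lam / 2) * Real.Gamma (-lam)))) := by
  obtain ⟨h1, h2⟩ := hlam
  obtain ⟨a, rfl⟩ : ∃ a, lam = -a := ⟨-lam, by ring⟩
  have ha : 0 < a := by linarith
  have ha2 : a < 2 := by linarith
  have hlim := (aux_limit a p ha ha2 hp).const_mul (Real.Gamma a)⁻¹
  have hval : (Real.Gamma a)⁻¹ *
      ∫ s in Set.Ioi (0:ℝ), s ^ (a - 1) * (p * (s ^ 2 + p ^ 2)⁻¹) =
      -(Real.pi/2) * p ^ (- -a - 1) /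
        (Real.sin (Real.pi * -a / 2) * Real.Gamma (- -a)) := by
    simp_rw [mul_left_comm _ p]
    rw [MeasureTheory.integral_const_mul, (aux_int a p ha ha2 hp).2, neg_neg,
      show Real.pi * -a / 2 = -(Real.pi * a / 2) by ring, Real.sin_neg,
      show a - 1 = (a - 2) + 1 by ring, Real.rpow_add hp, Real.rpow_one]
    have hs : 0 < Real.sin (Real.pi * a / 2) := by
      apply Real.sin_pos_of_pos_of_lt_pi
      · positivity
      · nlinarith [Real.pi_pos]
    have hG := Real.Gamma_pos_of_pos ha
    field_simp
  rw [hval] at hlim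
  refine hlim.congr' ?_
  filter_upwards [eventually_gt_atTop 0] with T hT
  exact (aux_fubini a p T ha ha2 hp hT).symm
end

section
/- Let α ∈ ℝ and let ψ ∈ L^{2,∞}(ℝ₊) satisfy ∫₀^∞ p ψ(p) dp = 0. Define (L̃_D ψ)(p) := p² ψ(p) + (α − 1/4) ∫₀^∞ min(p,q) ψ(q) dq (the inner integral converges absolutely). Then for every x > 0: −(𝓕_D ψ)''(x) + (α − 1/4) x⁻² (𝓕_D ψ)(x) = √(2/π) ∫₀^∞ sin(px) (L̃_D ψ)(p) dp, the last integral converging absolutely; i.e., the sine transform intertwines the momentum-space Dirichlet Bessel operator with the Bessel differential expression L_α. -/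
open MeasureTheory

/-- `ψ ∈ L^{2,∞}(ℝ₊)`: measurable with `∫₀^∞ pⁿ |ψ(p)|² dp < ∞` for all `n`. -/
def MemL2Inf (ψ : ℝ → ℂ) : Prop :=
  AEStronglyMeasurable ψ (volume.restrict (Set.Ioi 0)) ∧
  ∀ n : ℕ, IntegrableOn (fun p : ℝ => p ^ n * ‖ψ p‖^2) (Set.Ioi 0)

/-- The sine transform `(𝓕_D ψ)(x) = √(2/π) ∫₀^∞ sin(px) ψ(p) dp`. -/
noncomputable def sineTransform (ψ : ℝ → ℂ) : ℝ → ℂ :=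
  fun x => (Real.sqrt (2 / Real.pi) : ℂ) * ∫ p in Set.Ioi (0:ℝ), (Real.sin (p * x) : ℂ) * ψ p

/-- The momentum-space Dirichlet Bessel operator
`(L̃_D ψ)(p) = p² ψ(p) + (α - 1/4) ∫₀^∞ min(p,q) ψ(q) dq`. -/
noncomputable def momentumBesselD (α : ℝ) (ψ : ℝ → ℂ) : ℝ → ℂ :=
  fun p => (p : ℂ)^2 * ψ p
    + ((α : ℂ) - 1/4) * ∫ q in Set.Ioi (0:ℝ), ((min p q : ℝ) : ℂ) * ψ q

lemma aux_integrable (ψ : ℝ → ℂ) (hψ : MemL2Inf ψ) (n : ℕ) :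
    IntegrableOn (fun p : ℝ => (p : ℂ) ^ n * ψ p) (Set.Ioi 0) := by
  obtain ⟨hm, hi⟩ := hψ
  have h1 : IntegrableOn (fun p : ℝ => (1 + p ^ 2)⁻¹ +
      (p ^ (2 * n) * ‖ψ p‖ ^ 2 + p ^ (2 * n + 2) * ‖ψ p‖ ^ 2)) (Set.Ioi 0) :=
    (integrable_inv_one_add_sq.integrableOn).add ((hi _).add (hi _))
  refine Integrable.mono' h1 ?_ ?_
  · exact (by fun_prop : Continuous fun p : ℝ => (p : ℂ) ^ n).aestronglyMeasurable.mul hm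
  · filter_upwards [ae_restrict_mem measurableSet_Ioi] with p hp
    have hp : 0 < p := hp
    rw [norm_mul, norm_pow, Complex.norm_real, Real.norm_of_nonneg hp.le]
    set a := p ^ n * ‖ψ p‖ with ha
    have e : p ^ (2 * n) * ‖ψ p‖ ^ 2 + p ^ (2 * n + 2) * ‖ψ p‖ ^ 2 = (1 + p ^ 2) * a ^ 2 := by
      rw [ha]; ring
    rw [e]
    have hb : 0 < 1 + p ^ 2 := by positivity
    set b := 1 + p ^ 2
    have ha0 : 0 ≤ a := by positivity
    have : b⁻¹ + b * a ^ 2 - a = b⁻¹ * ((1 - b * a) ^ 2 + b * a) := by field_simp; ring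
    have : 0 ≤ b⁻¹ * ((1 - b * a) ^ 2 + b * a) := by positivity
    linarith

lemma aux_deriv_sin (f : ℝ → ℂ) (h0 : IntegrableOn f (Set.Ioi 0))
    (h1 : IntegrableOn (fun p : ℝ => (p : ℂ) * f p) (Set.Ioi 0)) (x : ℝ) :
    HasDerivAt (fun x : ℝ => ∫ p in Set.Ioi (0:ℝ), (Real.sin (p * x) : ℂ) * f p)
      (∫ p in Set.Ioi (0:ℝ), (Real.cos (p * x) : ℂ) * ((p : ℂ) * f p)) x := by
  refine (hasDerivAt_integral_of_dominated_loc_of_deriv_le (s := Set.univ)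
    (bound := fun p : ℝ => ‖(p : ℂ) * f p‖)
    (F' := fun (x p : ℝ) => (Real.cos (p * x) : ℂ) * ((p : ℂ) * f p))
    Filter.univ_mem ?_ ?_ ?_ ?_ h1.norm ?_).2
  · refine Filter.Eventually.of_forall fun y => ?_
    exact (by fun_prop : Continuous fun p : ℝ => (Real.sin (p * y) : ℂ)).aestronglyMeasurable.mul
      h0.aestronglyMeasurable
  · refine Integrable.mono h0 ((by fun_prop : Continuous fun p : ℝ =>
      (Real.sin (p * x) : ℂ)).aestronglyMeasurable.mul h0.aestronglyMeasurable) ?_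
    refine Filter.Eventually.of_forall fun p => ?_
    rw [norm_mul, Complex.norm_real]
    exact mul_le_of_le_one_left (norm_nonneg _) (Real.abs_sin_le_one _)
  · exact (by fun_prop : Continuous fun p : ℝ => (Real.cos (p * x) : ℂ)).aestronglyMeasurable.mul
      h1.aestronglyMeasurable
  · refine Filter.Eventually.of_forall fun p y _ => ?_
    rw [norm_mul, Complex.norm_real]
    exact mul_le_of_le_one_left (norm_nonneg _) (Real.abs_cos_le_one _)
  · refine Filter.Eventually.of_forall fun p y _ => ?_
    have := ((((hasDerivAt_id y).const_mul p).sin).ofReal_comp).mul_const (f p)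
    refine HasDerivAt.congr_deriv (f' := _) this ?_
    simp only [id]
    push_cast
    ring

lemma aux_deriv_cos (f : ℝ → ℂ) (h0 : IntegrableOn f (Set.Ioi 0))
    (h1 : IntegrableOn (fun p : ℝ => (p : ℂ) * f p) (Set.Ioi 0)) (x : ℝ) :
    HasDerivAt (fun x : ℝ => ∫ p in Set.Ioi (0:ℝ), (Real.cos (p * x) : ℂ) * f p)
      (∫ p in Set.Ioi (0:ℝ), -((Real.sin (p * x) : ℂ) * ((p : ℂ) * f p))) x := by
  refine (hasDerivAt_integral_of_dominated_loc_of_deriv_le (s := Set.univ)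
    (bound := fun p : ℝ => ‖(p : ℂ) * f p‖)
    (F' := fun (x p : ℝ) => -((Real.sin (p * x) : ℂ) * ((p : ℂ) * f p)))
    Filter.univ_mem ?_ ?_ ?_ ?_ h1.norm ?_).2
  · refine Filter.Eventually.of_forall fun y => ?_
    exact (by fun_prop : Continuous fun p : ℝ => (Real.cos (p * y) : ℂ)).aestronglyMeasurable.mul
      h0.aestronglyMeasurable
  · refine Integrable.mono h0 ((by fun_prop : Continuous fun p : ℝ =>
      (Real.cos (p * x) : ℂ)).aestronglyMeasurable.mul h0.aestronglyMeasurable) ?_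
    refine Filter.Eventually.of_forall fun p => ?_
    rw [norm_mul, Complex.norm_real]
    exact mul_le_of_le_one_left (norm_nonneg _) (Real.abs_cos_le_one _)
  · exact ((by fun_prop : Continuous fun p : ℝ => (Real.sin (p * x) : ℂ)).aestronglyMeasurable.mul
      h1.aestronglyMeasurable).neg
  · refine Filter.Eventually.of_forall fun p y _ => ?_
    rw [norm_neg, norm_mul, Complex.norm_real]
    exact mul_le_of_le_one_left (norm_nonneg _) (Real.abs_sin_le_one _)
  · refine Filter.Eventually.of_forall fun p y _ => ?_
    have := ((((hasDerivAt_id y).const_mul p).cos).ofReal_comp).mul_const (f p)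
    refine HasDerivAt.congr_deriv (f' := _) this ?_
    simp only [id]
    push_cast
    ring

/-- The kernel integral. -/
lemma aux_kernel (x : ℝ) (hx : 0 < x) (q : ℝ) (hq : 0 < q) :
    ∫ p in Set.Ioi (0:ℝ), Real.sin (p * x) * max (q - p) 0
      = q / x - Real.sin (q * x) / x ^ 2 := by
  have e : ∫ p in Set.Ioi (0:ℝ), Real.sin (p * x) * max (q - p) 0
      = ∫ p in Set.Ioc (0:ℝ) q, Real.sin (p * x) * max (q - p) 0 := by
    refine setIntegral_eq_of_subset_of_forall_sdiff_eq_zero measurableSet_Ioi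
      (fun p hp => hp.1) ?_
    rintro p ⟨hp, hp'⟩
    have : q < p := by
      by_contra h
      exact hp' ⟨hp, not_lt.1 h⟩
    rw [max_eq_right (by linarith), mul_zero]
  rw [e, ← intervalIntegral.integral_of_le hq.le]
  have e2 : ∫ p in (0:ℝ)..q, Real.sin (p * x) * max (q - p) 0
      = ∫ p in (0:ℝ)..q, Real.sin (p * x) * (q - p) := by
    refine intervalIntegral.integral_congr fun p hp => ?_
    rw [Set.uIcc_of_le hq.le] at hp
    rw [max_eq_left (by linarith [hp.2])]
  rw [e2, intervalIntegral.integral_eq_sub_of_hasDerivAt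
    (f := fun p => -((q - p) * Real.cos (p * x)) / x - Real.sin (p * x) / x ^ 2)]
  · simp; ring
  · intro p _
    have hpx : HasDerivAt (fun p : ℝ => p * x) x p := by
      simpa using (hasDerivAt_id p).mul_const x
    have := ((((hasDerivAt_id p).const_sub q).mul hpx.cos).neg.div_const x).sub
      (hpx.sin.div_const (x ^ 2))
    refine HasDerivAt.congr_deriv (f' := _) this ?_
    simp only [id]
    field_simp
    ring
  · exact (by fun_prop : Continuous fun p => Real.sin (p * x) * (q - p)).intervalIntegrable _ _

lemma aux_slice (q : ℝ) (hq : 0 < q) (x : ℝ) :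
    IntegrableOn (fun p => Real.sin (p * x) * max (q - p) 0) (Set.Ioi 0) ∧
    ∫ p in Set.Ioi (0:ℝ), ‖Real.sin (p * x) * max (q - p) 0‖ ≤ q * q := by
  have hI : Integrable (Set.indicator (Set.Ioc 0 q) fun _ : ℝ => q)
      (volume.restrict (Set.Ioi 0)) := by
    refine Integrable.restrict ?_
    rw [integrable_indicator_iff measurableSet_Ioc]
    exact integrableOn_const (by simp)
  have hb : ∀ p ∈ Set.Ioi (0:ℝ), ‖Real.sin (p * x) * max (q - p) 0‖ ≤
      Set.indicator (Set.Ioc 0 q) (fun _ : ℝ => q) p := by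
    intro p hp
    have hp : 0 < p := hp
    by_cases h : p ≤ q
    · rw [Set.indicator_of_mem (show p ∈ Set.Ioc 0 q from ⟨hp, h⟩), norm_mul,
        max_eq_left (by linarith), Real.norm_of_nonneg (show 0 ≤ q - p by linarith)]
      have := Real.abs_sin_le_one (p * x)
      rw [← Real.norm_eq_abs] at this
      nlinarith
    · rw [max_eq_right (by linarith), mul_zero, norm_zero]
      exact Set.indicator_nonneg (fun _ _ => hq.le) _
  have hi : IntegrableOn (fun p => Real.sin (p * x) * max (q - p) 0) (Set.Ioi 0) := by
    refine Integrable.mono' hI (by fun_prop : Continuous fun p =>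
      Real.sin (p * x) * max (q - p) 0).aestronglyMeasurable ?_
    filter_upwards [ae_restrict_mem measurableSet_Ioi] with p hp using hb p hp
  refine ⟨hi, ?_⟩
  refine (setIntegral_mono_on hi.norm hI measurableSet_Ioi hb).trans ?_
  rw [setIntegral_indicator measurableSet_Ioc,
    Set.inter_eq_right.2 (show Set.Ioc 0 q ⊆ Set.Ioi 0 from fun p hp => hp.1)]
  simp [hq.le]

lemma aux_prod (ψ : ℝ → ℂ) (hψ : MemL2Inf ψ) (x : ℝ) :
    Integrable (fun z : ℝ × ℝ => ((Real.sin (z.1 * x) * max (z.2 - z.1) 0 : ℝ) : ℂ) * ψ z.2)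
      ((volume.restrict (Set.Ioi 0)).prod (volume.restrict (Set.Ioi 0))) := by
  have hm : AEStronglyMeasurable
      (fun z : ℝ × ℝ => ((Real.sin (z.1 * x) * max (z.2 - z.1) 0 : ℝ) : ℂ) * ψ z.2)
      ((volume.restrict (Set.Ioi 0)).prod (volume.restrict (Set.Ioi 0))) :=
    (by fun_prop : Continuous fun z : ℝ × ℝ =>
      ((Real.sin (z.1 * x) * max (z.2 - z.1) 0 : ℝ) : ℂ)).aestronglyMeasurable.mul hψ.1.comp_snd
  rw [integrable_prod_iff' hm]
  constructor
  · filter_upwards [ae_restrict_mem measurableSet_Ioi] with q hq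
    exact (Integrable.ofReal (aux_slice q hq x).1).mul_const _
  · refine Integrable.mono' (aux_integrable ψ hψ 2).norm
      hm.norm.prod_swap.integral_prod_right' ?_
    filter_upwards [ae_restrict_mem measurableSet_Ioi] with q hq
    have hq : 0 < q := hq
    simp only [norm_mul _ (ψ q), Complex.norm_real]
    rw [integral_mul_const, norm_mul, norm_norm, norm_pow, Complex.norm_real,
      Real.norm_of_nonneg hq.le, Real.norm_of_nonneg (integral_nonneg fun _ => norm_nonneg _)]
    refine mul_le_mul_of_nonneg_right ?_ (norm_nonneg _)
    rw [sq]
    exact (aux_slice q hq x).2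

/-- The sine transform intertwines the momentum-space Dirichlet Bessel operator with the
Bessel differential expression `L_α`, on minimal-domain vectors. -/
theorem sineTransform_intertwines_besselD (α : ℝ) (ψ : ℝ → ℂ) (hψ : MemL2Inf ψ)
    (hmom : ∫ p in Set.Ioi (0:ℝ), (p : ℂ) * ψ p = 0) :
    (∀ p > (0:ℝ), IntegrableOn (fun q : ℝ => ((min p q : ℝ) : ℂ) * ψ q) (Set.Ioi 0)) ∧
    ∀ x > (0:ℝ),
      IntegrableOn (fun p : ℝ => (Real.sin (p * x) : ℂ) * momentumBesselD α ψ p)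
        (Set.Ioi 0) ∧
      -(deriv (deriv (sineTransform ψ)) x)
          + ((α : ℂ) - 1/4) * ((x : ℂ)^2)⁻¹ * sineTransform ψ x
        = (Real.sqrt (2 / Real.pi) : ℂ) *
            ∫ p in Set.Ioi (0:ℝ), (Real.sin (p * x) : ℂ) * momentumBesselD α ψ p := by
  have i0 : IntegrableOn ψ (Set.Ioi 0) := by simpa using aux_integrable ψ hψ 0
  have i1 : IntegrableOn (fun p : ℝ => (p : ℂ) * ψ p) (Set.Ioi 0) := by
    simpa using aux_integrable ψ hψ 1
  have i2 : IntegrableOn (fun p : ℝ => (p : ℂ) * ((p : ℂ) * ψ p)) (Set.Ioi 0) := by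
    simpa [sq, mul_assoc] using aux_integrable ψ hψ 2
  have hmin : ∀ p > (0:ℝ),
      IntegrableOn (fun q : ℝ => ((min p q : ℝ) : ℂ) * ψ q) (Set.Ioi 0) := by
    intro p hp
    refine Integrable.mono i1 ((by fun_prop : Continuous fun q : ℝ =>
      ((min p q : ℝ) : ℂ)).aestronglyMeasurable.mul hψ.1) ?_
    filter_upwards [ae_restrict_mem measurableSet_Ioi] with q hq
    have hq : 0 < q := hq
    rw [norm_mul, norm_mul, Complex.norm_real, Complex.norm_real, Real.norm_of_nonneg hq.le,
      Real.norm_of_nonneg (le_min hp.le hq.le)]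
    exact mul_le_mul_of_nonneg_right (min_le_right _ _) (norm_nonneg _)
  refine ⟨hmin, fun x hx => ?_⟩
  -- rewriting the nonlocal term
  have hM : ∀ p > (0:ℝ), (Real.sin (p * x) : ℂ) * ∫ q in Set.Ioi (0:ℝ), ((min p q : ℝ) : ℂ) * ψ q
      = -∫ q in Set.Ioi (0:ℝ), ((Real.sin (p * x) * max (q - p) 0 : ℝ) : ℂ) * ψ q := by
    intro p hp
    have e : ∫ q in Set.Ioi (0:ℝ), ((min p q : ℝ) : ℂ) * ψ q
        = ∫ q in Set.Ioi (0:ℝ), (((min p q : ℝ) : ℂ) * ψ q - (q : ℂ) * ψ q) := by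
      rw [integral_sub (hmin p hp) i1, hmom, sub_zero]
    rw [e, ← integral_const_mul, ← integral_neg]
    congr 1
    ext q
    have : min p q - q = - max (q - p) 0 := by
      rcases le_total p q with h | h
      · rw [min_eq_left h, max_eq_left (by linarith)]; ring
      · rw [min_eq_right h, max_eq_right (by linarith)]; ring
    rw [← sub_mul, ← Complex.ofReal_sub, this]
    push_cast
    ring
  have hprod := aux_prod ψ hψ x
  have hMi : IntegrableOn (fun p : ℝ => (Real.sin (p * x) : ℂ) *
      ∫ q in Set.Ioi (0:ℝ), ((min p q : ℝ) : ℂ) * ψ q) (Set.Ioi 0) :=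
    (integrableOn_congr_fun (fun p hp => hM p hp) measurableSet_Ioi).2 hprod.integral_prod_left.neg
  have isin : ∀ f : ℝ → ℂ, IntegrableOn f (Set.Ioi 0) →
      IntegrableOn (fun p : ℝ => (Real.sin (p * x) : ℂ) * f p) (Set.Ioi 0) := by
    intro f hf
    refine Integrable.mono hf ((by fun_prop : Continuous fun p : ℝ =>
      (Real.sin (p * x) : ℂ)).aestronglyMeasurable.mul hf.aestronglyMeasurable) ?_
    refine Filter.Eventually.of_forall fun p => ?_
    rw [norm_mul, Complex.norm_real]
    exact mul_le_of_le_one_left (norm_nonneg _) (Real.abs_sin_le_one _)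
  have hMv : ∫ p in Set.Ioi (0:ℝ), (Real.sin (p * x) : ℂ) *
      ∫ q in Set.Ioi (0:ℝ), ((min p q : ℝ) : ℂ) * ψ q
      = ((x : ℂ)^2)⁻¹ * ∫ q in Set.Ioi (0:ℝ), (Real.sin (q * x) : ℂ) * ψ q := by
    rw [setIntegral_congr_fun measurableSet_Ioi (fun p hp => hM p hp), integral_neg,
      integral_integral_swap hprod]
    have e : ∀ q ∈ Set.Ioi (0:ℝ), ∫ p in Set.Ioi (0:ℝ),
        ((Real.sin (p * x) * max (q - p) 0 : ℝ) : ℂ) * ψ q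
        = (x : ℂ)⁻¹ * ((q : ℂ) * ψ q) - ((x : ℂ)^2)⁻¹ * ((Real.sin (q * x) : ℂ) * ψ q) := by
      intro q hq
      rw [integral_mul_const, integral_complex_ofReal, aux_kernel x hx q hq]
      push_cast
      ring
    rw [setIntegral_congr_fun measurableSet_Ioi e, integral_sub (i1.const_mul _)
      ((isin ψ i0).const_mul _), integral_const_mul, integral_const_mul, hmom]
    ring
  have hsplit : (fun p : ℝ => (Real.sin (p * x) : ℂ) * momentumBesselD α ψ p)
      = fun p : ℝ => (Real.sin (p * x) : ℂ) * ((p : ℂ) * ((p : ℂ) * ψ p))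
        + ((α : ℂ) - 1/4) * ((Real.sin (p * x) : ℂ) *
      ∫ q in Set.Ioi (0:ℝ), ((min p q : ℝ) : ℂ) * ψ q) := by
    ext p
    unfold momentumBesselD
    ring
  have hd1 : deriv (sineTransform ψ) = fun y => (Real.sqrt (2 / Real.pi) : ℂ) *
      ∫ p in Set.Ioi (0:ℝ), (Real.cos (p * y) : ℂ) * ((p : ℂ) * ψ p) := by
    ext y
    exact ((aux_deriv_sin ψ i0 i1 y).const_mul _).deriv
  have hd2 : deriv (deriv (sineTransform ψ)) x = (Real.sqrt (2 / Real.pi) : ℂ) *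
      ∫ p in Set.Ioi (0:ℝ), -((Real.sin (p * x) : ℂ) * ((p : ℂ) * ((p : ℂ) * ψ p))) := by
    rw [hd1]
    exact ((aux_deriv_cos _ i1 i2 x).const_mul _).deriv
  rw [hsplit]
  refine ⟨(isin _ i2).add (hMi.const_mul _), ?_⟩
  rw [integral_add (isin _ i2) (hMi.const_mul _), integral_const_mul, hMv, hd2, integral_neg]
  unfold sineTransform
  ring
end
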